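/- arXiv:1512.05504 — 2 statements merged into one kernel-verified Lean document; each statement's English description precedes it below -/
import Mathlib

section
/- There exist a strict preference profile P on a set of 4 agents and two metric weight functions w_1 and w_2, both consistent with P, such that for every probability distribution p over the perfect matchings of the 4 agents, min( E_{M∼p}[w_1(M)] / OPT(w_1), E_{M∼p}[w_2(M)] / OPT(w_2) ) ≤ 4/5, where OPT(w_i) is the maximum weight of a perfect matching under w_i. Consequently, no randomized ordinal algorithm for Maximum Weighted Matching with metric weights can achieve an expected approximation factor better than 5/4. -/
/-- `P i j k` means agent `i` strictly prefers agent `j` to agent `k`. `P` is a strict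
preference profile if, for every agent `i`, `P i` is a strict total order on the other
agents. -/
def IsPrefProfile {V : Type*} (P : V → V → V → Prop) : Prop :=
  ∀ i : V,
    (∀ j k, P i j k → j ≠ i ∧ k ≠ i ∧ j ≠ k) ∧
    (∀ j k, j ≠ i → k ≠ i → j ≠ k → (P i j k ↔ ¬ P i k j)) ∧
    (∀ j k l, P i j k → P i k l → P i j l)

/-- `w` is consistent with the preference profile `P`: whenever `i` prefers `j` to `k`,
`w i j ≥ w i k`. -/
def Consistent {V : Type*} (P : V → V → V → Prop) (w : V → V → ℝ) : Prop :=
  ∀ i j k, P i j k → w i k ≤ w i j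

/-- A perfect matching encoded as a fixed-point-free involutive permutation. -/
def IsPM {V : Type*} (σ : Equiv.Perm V) : Prop :=
  (∀ x, σ (σ x) = x) ∧ ∀ x, σ x ≠ x

/-- The weight of the perfect matching `σ`: each edge is counted twice in the sum. -/
noncomputable def pmWeight {V : Type*} [Fintype V] (w : V → V → ℝ) (σ : Equiv.Perm V) : ℝ :=
  (∑ x, w x (σ x)) / 2

/-- `v` is the maximum weight of a perfect matching under `w`. -/
def IsOptVal {V : Type*} [Fintype V] (w : V → V → ℝ) (v : ℝ) : Prop :=
  (∃ σ : Equiv.Perm V, IsPM σ ∧ pmWeight w σ = v) ∧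
  ∀ σ : Equiv.Perm V, IsPM σ → pmWeight w σ ≤ v

/-- First weight function: pair `{0,1}` has weight 2, all other pairs weight 1. -/
def natW1 (x y : Fin 4) : ℕ := if x = y then 0 else if x < 2 ∧ y < 2 then 2 else 1

/-- Second weight function: pair `{2,3}` has weight 0, all other pairs weight 1. -/
def natW2 (x y : Fin 4) : ℕ := if x = y then 0 else if 2 ≤ x ∧ 2 ≤ y then 0 else 1

theorem natW_facts : ∀ σ : Equiv.Perm (Fin 4), ((∀ x, σ (σ x) = x) ∧ ∀ x, σ x ≠ x) →
    (∑ x, natW1 x (σ x)) ≤ 6 ∧ (∑ x, natW2 x (σ x)) ≤ 4 ∧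
    (∑ x, natW1 x (σ x)) + (∑ x, natW2 x (σ x)) = 8 := by
  decide +kernel

/-- there are a strict preference profile on 4 agents and two metric weight
functions `w₁, w₂` consistent with it such that every probability distribution `p` over
perfect matchings satisfies
`min (E_p[w₁(M)]/OPT(w₁)) (E_p[w₂(M)]/OPT(w₂)) ≤ 4/5`; hence no randomized ordinal
algorithm beats `5/4` for metric Maximum Weighted Matching. -/
theorem stmt_10 :
    ∃ (P : Fin 4 → Fin 4 → Fin 4 → Prop) (w1 w2 : Fin 4 → Fin 4 → ℝ) (opt1 opt2 : ℝ),
      IsPrefProfile P ∧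
      (∀ x y, 0 ≤ w1 x y) ∧ (∀ x y, w1 x y = w1 y x) ∧
      (∀ x y z : Fin 4, x ≠ y → y ≠ z → x ≠ z → w1 x y ≤ w1 x z + w1 z y) ∧
      Consistent P w1 ∧
      (∀ x y, 0 ≤ w2 x y) ∧ (∀ x y, w2 x y = w2 y x) ∧
      (∀ x y z : Fin 4, x ≠ y → y ≠ z → x ≠ z → w2 x y ≤ w2 x z + w2 z y) ∧
      Consistent P w2 ∧
      IsOptVal w1 opt1 ∧ IsOptVal w2 opt2 ∧
      ∀ p : Equiv.Perm (Fin 4) → ℝ,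
        (∀ σ, 0 ≤ p σ) → (∀ σ, ¬ IsPM σ → p σ = 0) → (∑ σ, p σ) = 1 →
        min ((∑ σ, p σ * pmWeight w1 σ) / opt1)
            ((∑ σ, p σ * pmWeight w2 σ) / opt2) ≤ 4 / 5 := by
  have f1 : ∀ σ : Equiv.Perm (Fin 4), pmWeight (fun x y => (natW1 x y : ℝ)) σ
      = ((∑ x, natW1 x (σ x) : ℕ) : ℝ) / 2 := by
    intro σ; simp [pmWeight]
  have f2 : ∀ σ : Equiv.Perm (Fin 4), pmWeight (fun x y => (natW2 x y : ℝ)) σ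
      = ((∑ x, natW2 x (σ x) : ℕ) : ℝ) / 2 := by
    intro σ; simp [pmWeight]
  refine ⟨fun i j k => j ≠ i ∧ k ≠ i ∧ j < k, fun x y => (natW1 x y : ℝ),
    fun x y => (natW2 x y : ℝ), 3, 2, ?_, ?_, ?_, ?_, ?_, ?_, ?_, ?_, ?_, ?_, ?_, ?_⟩
  · intro i; refine ⟨?_, ?_, ?_⟩ <;> beta_reduce <;> revert i <;> decide +kernel
  · intro x y; positivity
  · intro x y
    have h : ∀ x y, natW1 x y = natW1 y x := by decide +kernel
    beta_reduce; exact_mod_cast h x y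
  · have h : ∀ x y z : Fin 4, x ≠ y → y ≠ z → x ≠ z →
        natW1 x y ≤ natW1 x z + natW1 z y := by decide +kernel
    intro x y z h1 h2 h3
    beta_reduce; exact_mod_cast h x y z h1 h2 h3
  · have h : ∀ i j k : Fin 4, (j ≠ i ∧ k ≠ i ∧ j < k) → natW1 i k ≤ natW1 i j := by
      decide +kernel
    intro i j k hp
    beta_reduce; exact_mod_cast h i j k hp
  · intro x y; positivity
  · intro x y
    have h : ∀ x y, natW2 x y = natW2 y x := by decide +kernel
    beta_reduce; exact_mod_cast h x y
  · have h : ∀ x y z : Fin 4, x ≠ y → y ≠ z → x ≠ z →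
        natW2 x y ≤ natW2 x z + natW2 z y := by decide +kernel
    intro x y z h1 h2 h3
    beta_reduce; exact_mod_cast h x y z h1 h2 h3
  · have h : ∀ i j k : Fin 4, (j ≠ i ∧ k ≠ i ∧ j < k) → natW2 i k ≤ natW2 i j := by
      decide +kernel
    intro i j k hp
    beta_reduce; exact_mod_cast h i j k hp
  · constructor
    · have h : ∃ σ : Equiv.Perm (Fin 4), ((∀ x, σ (σ x) = x) ∧ ∀ x, σ x ≠ x) ∧
          (∑ x, natW1 x (σ x)) = 6 := by decide +kernel
      obtain ⟨σ, hσ, hs⟩ := h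
      refine ⟨σ, hσ, ?_⟩
      rw [f1, hs]; norm_num
    · intro σ hσ
      have h : ((∑ x, natW1 x (σ x) : ℕ) : ℝ) ≤ 6 := by exact_mod_cast (natW_facts σ hσ).1
      rw [f1]; linarith
  · constructor
    · have h : ∃ σ : Equiv.Perm (Fin 4), ((∀ x, σ (σ x) = x) ∧ ∀ x, σ x ≠ x) ∧
          (∑ x, natW2 x (σ x)) = 4 := by decide +kernel
      obtain ⟨σ, hσ, hs⟩ := h
      refine ⟨σ, hσ, ?_⟩
      rw [f2, hs]; norm_num
    · intro σ hσ
      have h : ((∑ x, natW2 x (σ x) : ℕ) : ℝ) ≤ 4 := by exact_mod_cast (natW_facts σ hσ).2.1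
      rw [f2]; linarith
  · intro p _ hz h1
    have key : (∑ σ, p σ * pmWeight (fun x y => (natW1 x y : ℝ)) σ)
        + (∑ σ, p σ * pmWeight (fun x y => (natW2 x y : ℝ)) σ) = 4 := by
      rw [← Finset.sum_add_distrib]
      have : ∀ σ : Equiv.Perm (Fin 4), p σ * pmWeight (fun x y => (natW1 x y : ℝ)) σ
          + p σ * pmWeight (fun x y => (natW2 x y : ℝ)) σ = p σ * 4 := by
        intro σ
        by_cases hσ : IsPM σ
        · have h : ((∑ x, natW1 x (σ x) : ℕ) : ℝ) + ((∑ x, natW2 x (σ x) : ℕ) : ℝ) = 8 := by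
            exact_mod_cast (natW_facts σ hσ).2.2
          rw [f1, f2, ← mul_add, ← add_div, h]; norm_num
        · rw [hz σ hσ]; ring
      rw [Finset.sum_congr rfl (fun σ _ => this σ), ← Finset.sum_mul, h1, one_mul]
    rw [min_le_iff]
    by_contra! hc
    obtain ⟨ha, hb⟩ := hc
    linarith
end

section
/- Let w be metric weights on a finite set 𝒩, let k be an even integer with 2 ≤ k ≤ |𝒩|, let M be a matching on 𝒩 with k/2 edges and let S be the set of k points covered by M. Let M* be a maximum-weight matching on 𝒩 with k/2 edges, and suppose w(M*) ≤ α·w(M) for some α ≥ 1. Then for every subset O ⊆ 𝒩 with |O| = k, Σ_{ {x,y} ⊆ O } w(x,y) ≤ 2α · Σ_{ {x,y} ⊆ S } w(x,y). In particular, the vertex set of an α-approximate (k/2)-matching is a 2α-approximation for the Densest k-Subgraph problem. -/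
/-- A matching given as a list of `m` edges: each edge has distinct endpoints and
different edges are vertex-disjoint. -/
def IsMatching {V : Type*} {m : ℕ} (f : Fin m → V × V) : Prop :=
  (∀ i, (f i).1 ≠ (f i).2) ∧
  ∀ i j, i ≠ j →
    (f i).1 ≠ (f j).1 ∧ (f i).1 ≠ (f j).2 ∧ (f i).2 ≠ (f j).1 ∧ (f i).2 ≠ (f j).2

/-- The weight of a matching: the sum of the weights of its edges. -/
def mWeight {V : Type*} {m : ℕ} (w : V → V → ℝ) (f : Fin m → V × V) : ℝ :=
  ∑ i, w (f i).1 (f i).2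

theorem aux_offDiag {V ι : Type*} [DecidableEq V] [Fintype ι] [DecidableEq ι]
    (w : V → V → ℝ) (u : ι → V) (hu : Function.Injective u) (S : Finset V)
    (hS : ∀ v, v ∈ S ↔ ∃ i, u i = v) :
    ∑ p ∈ S.offDiag, w p.1 p.2 = ∑ p ∈ (Finset.univ : Finset ι).offDiag, w (u p.1) (u p.2) := by
  symm
  refine Finset.sum_bij (fun p _ => (u p.1, u p.2)) ?_ ?_ ?_ ?_
  · rintro ⟨a, b⟩ h
    simp only [Finset.mem_offDiag, hS] at h ⊢
    exact ⟨⟨a, rfl⟩, ⟨b, rfl⟩, fun h' => h.2.2 (hu h')⟩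
  · rintro ⟨a, b⟩ _ ⟨c, d⟩ _ h
    simp only [Prod.mk.injEq] at h
    rw [hu h.1, hu h.2]
  · rintro ⟨a, b⟩ h
    simp only [Finset.mem_offDiag, hS] at h
    obtain ⟨⟨i, rfl⟩, ⟨j, rfl⟩, h3⟩ := h
    refine ⟨(i, j), ?_, rfl⟩
    simp only [Finset.mem_offDiag, Finset.mem_univ, true_and]
    rintro rfl
    exact h3 rfl
  · intros; rfl

theorem aux_lower {V : Type*} (m : ℕ) (w : V → V → ℝ)
    (hsymm : ∀ x y, w x y = w y x)
    (hmetric : ∀ x y z : V, x ≠ y → y ≠ z → x ≠ z → w x y ≤ w x z + w z y)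
    (u : Fin m × Bool → V) (hu : Function.Injective u) :
    2 * m * (∑ i, w (u (i, true)) (u (i, false))) ≤
      ∑ p ∈ (Finset.univ : Finset (Fin m × Bool)).offDiag, w (u p.1) (u p.2) := by
  have h1 : ∑ p ∈ (Finset.univ : Finset (Fin m × Bool)).offDiag, w (u p.1) (u p.2)
      = ∑ i, ∑ j, ∑ b, ∑ c, if ((i, b) : Fin m × Bool) = (j, c) then 0
          else w (u (i, b)) (u (j, c)) := by
    have : (Finset.univ : Finset (Fin m × Bool)).offDiag
      = Finset.univ.filter (fun p => ¬ p.1 = p.2) := by ext; simp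
    rw [this, Finset.sum_filter, Fintype.sum_prod_type, Fintype.sum_prod_type]
    refine Finset.sum_congr rfl fun i _ => ?_
    rw [Finset.sum_comm, Fintype.sum_prod_type]
    refine Finset.sum_congr rfl fun j _ => ?_
    rw [Finset.sum_comm]
    refine Finset.sum_congr rfl fun b _ => Finset.sum_congr rfl fun c _ => ?_
    simp only [ite_not]
  have h2 : 2 * m * (∑ i, w (u (i, true)) (u (i, false)))
      = ∑ i, ∑ j, (w (u (i, true)) (u (i, false)) + w (u (j, true)) (u (j, false))) := by
    simp only [Finset.sum_add_distrib, Finset.sum_const, Finset.card_univ, Fintype.card_fin,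
      nsmul_eq_mul, ← Finset.mul_sum]
    ring
  rw [h1, h2]
  refine Finset.sum_le_sum fun i _ => Finset.sum_le_sum fun j _ => ?_
  by_cases hij : i = j
  · subst hij
    simp
    rw [hsymm (u (i, false))]
  · have hji : ¬ j = i := fun h => hij h.symm
    have ne : ∀ p q, p ≠ q → u p ≠ u q := fun p q h h' => h (hu h')
    simp only [Fintype.sum_bool, Prod.mk.injEq, hij, false_and, if_false]
    have a1 := hmetric (u (i, true)) (u (i, false)) (u (j, true))
      (ne _ _ (by simp)) (ne _ _ (by simp [hij])) (ne _ _ (by simp [hij]))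
    have a2 := hmetric (u (i, true)) (u (i, false)) (u (j, false))
      (ne _ _ (by simp)) (ne _ _ (by simp [hij])) (ne _ _ (by simp [hij]))
    have a3 := hmetric (u (j, true)) (u (j, false)) (u (i, true))
      (ne _ _ (by simp)) (ne _ _ (by simp [hji])) (ne _ _ (by simp [hji]))
    have a4 := hmetric (u (j, true)) (u (j, false)) (u (i, false))
      (ne _ _ (by simp)) (ne _ _ (by simp [hji])) (ne _ _ (by simp [hji]))
    rw [hsymm (u (j, true)) (u (i, false))] at a1
    rw [hsymm (u (j, false)) (u (i, false))] at a2
    rw [hsymm (u (j, true)) (u (i, true))] at a3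
    rw [hsymm (u (j, true)) (u (i, false))] at a4
    linarith

theorem aux_trans {ι : Type*} [DecidableEq ι] (a b a' b' : ι) (h : a ≠ b) (h' : a' ≠ b') :
    ∃ τ : Equiv.Perm ι, τ a' = a ∧ τ b' = b := by
  refine ⟨Equiv.swap (Equiv.swap a' a b') b * Equiv.swap a' a, ?_, ?_⟩
  · rw [Equiv.Perm.mul_apply, Equiv.swap_apply_left]
    apply Equiv.swap_apply_of_ne_of_ne _ h
    intro h2
    have : Equiv.swap a' a a' = Equiv.swap a' a b' := by rw [Equiv.swap_apply_left]; exact h2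
    exact h' ((Equiv.swap a' a).injective this)
  · rw [Equiv.Perm.mul_apply, Equiv.swap_apply_left]

theorem aux_upper {V : Type*} (m : ℕ) (w : V → V → ℝ) (B : ℝ)
    (hm : 1 ≤ m) (hB0 : 0 ≤ B)
    (hB : ∀ u : Fin m × Bool → V, Function.Injective u →
      ∑ i, w (u (i, true)) (u (i, false)) ≤ B)
    (u : Fin m × Bool → V) (hu : Function.Injective u) :
    ∑ p ∈ (Finset.univ : Finset (Fin m × Bool)).offDiag, w (u p.1) (u p.2) ≤ 4 * m * B := by
  let T : Fin m × Bool → Fin m × Bool → ℝ := fun a b => ∑ σ : Equiv.Perm (Fin m × Bool), w (u (σ a)) (u (σ b))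
  let i0 : Fin m := ⟨0, hm⟩
  let T0 : ℝ := T (i0, true) (i0, false)
  let N : ℝ := (Finset.univ : Finset (Equiv.Perm (Fin m × Bool))).card
  have hN : 0 < N := by
    simp only [N, Nat.cast_pos, Finset.card_pos]
    exact Finset.univ_nonempty
  have hT : ∀ a b, a ≠ b → T a b = T0 := by
    intro a b h
    obtain ⟨τ, h1, h2⟩ := aux_trans a b (i0, true) (i0, false) h (by simp)
    simp only [T0, T]
    rw [← Equiv.sum_comp (Equiv.mulRight τ)
      (fun σ : Equiv.Perm (Fin m × Bool) => w (u (σ (i0, true))) (u (σ (i0, false))))]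
    refine Finset.sum_congr rfl fun σ _ => ?_
    simp only [Equiv.coe_mulRight, Equiv.Perm.mul_apply, h1, h2]
  have hmT : m * T0 ≤ N * B := by
    have e1 : (m : ℝ) * T0 = ∑ σ : Equiv.Perm (Fin m × Bool), ∑ i, w (u (σ (i, true))) (u (σ (i, false))) := by
      rw [Finset.sum_comm]
      rw [Finset.sum_congr rfl (fun i _ => hT (i, true) (i, false) (by simp))]
      simp
    rw [e1]
    have := Finset.sum_le_card_nsmul (Finset.univ : Finset (Equiv.Perm (Fin m × Bool)))
      (fun σ => ∑ i, w (u (σ (i, true))) (u (σ (i, false)))) B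
      (fun σ _ => hB (fun p => u (σ p)) (hu.comp σ.injective))
    simpa [N] using this
  have hW : N * ∑ p ∈ (Finset.univ : Finset (Fin m × Bool)).offDiag, w (u p.1) (u p.2)
      = (2 * m) * (2 * m - 1) * T0 := by
    have e1 : ∑ p ∈ (Finset.univ : Finset (Fin m × Bool)).offDiag, T p.1 p.2 = (2 * m) * (2 * m - 1) * T0 := by
      rw [Finset.sum_congr rfl (fun p hp => hT p.1 p.2 (Finset.mem_offDiag.1 hp).2.2)]
      rw [Finset.sum_const, Finset.offDiag_card, nsmul_eq_mul, Nat.cast_sub (Nat.le_mul_self _)]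
      simp
      left
      ring
    rw [← e1, Finset.sum_comm]
    have : ∀ σ : Equiv.Perm (Fin m × Bool), ∑ p ∈ (Finset.univ : Finset (Fin m × Bool)).offDiag, w (u (σ p.1)) (u (σ p.2))
        = ∑ p ∈ (Finset.univ : Finset (Fin m × Bool)).offDiag, w (u p.1) (u p.2) := by
      intro σ
      exact (aux_offDiag (fun a b => w (u a) (u b)) σ σ.injective Finset.univ
        (fun v => ⟨fun _ => σ.surjective v, fun _ => Finset.mem_univ _⟩)).symm
    rw [Finset.sum_congr rfl (fun σ _ => this σ)]
    simp [N]
  have hm' : (1 : ℝ) ≤ m := by exact_mod_cast hm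
  have h3 : N * ∑ p ∈ (Finset.univ : Finset (Fin m × Bool)).offDiag, w (u p.1) (u p.2) ≤ N * (4 * m * B) := by
    rw [hW]
    have := mul_le_mul_of_nonneg_left hmT (show (0 : ℝ) ≤ 2 * (2 * m - 1) by linarith)
    have := mul_nonneg hN.le hB0
    nlinarith
  exact le_of_mul_le_mul_left h3 hN

/-- metric weights on `𝒩`, `k = 2m` even with `2 ≤ k ≤ |𝒩|`, `f` a matching
with `k/2 = m` edges covering the vertex set `S`, `g*` a maximum-weight `m`-matching with
`w(M*) ≤ α·w(M)` (`α ≥ 1`).  Then every `O ⊆ 𝒩` with `|O| = k` satisfies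
`Σ_{{x,y}⊆O} w ≤ 2α · Σ_{{x,y}⊆S} w`: the vertex set of an `α`-approximate
`(k/2)`-matching is a `2α`-approximation for Densest `k`-Subgraph. -/
theorem stmt_14 {V : Type*} [Fintype V] [DecidableEq V]
    (m : ℕ) (hm : 1 ≤ m) (hcard : 2 * m ≤ Fintype.card V)
    (w : V → V → ℝ)
    (hnonneg : ∀ x y, 0 ≤ w x y)
    (hsymm : ∀ x y, w x y = w y x)
    (hmetric : ∀ x y z : V, x ≠ y → y ≠ z → x ≠ z → w x y ≤ w x z + w z y)
    (f : Fin m → V × V) (hf : IsMatching f)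
    (gstar : Fin m → V × V) (hgstar : IsMatching gstar)
    (hmax : ∀ g : Fin m → V × V, IsMatching g → mWeight w g ≤ mWeight w gstar)
    (α : ℝ) (hα : 1 ≤ α) (happrox : mWeight w gstar ≤ α * mWeight w f) :
    ∀ O : Finset V, O.card = 2 * m →
      (∑ p ∈ O.offDiag, w p.1 p.2) / 2
        ≤ 2 * α * ((∑ p ∈ (Finset.univ.filter
            (fun v : V => ∃ i, v = (f i).1 ∨ v = (f i).2)).offDiag, w p.1 p.2) / 2) := by
  intro O hO
  have h0 : ∀ u : Fin m × Bool → V, Function.Injective u →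
      ∑ i, w (u (i, true)) (u (i, false)) ≤ mWeight w gstar := by
    intro u hu
    refine hmax (fun i => (u (i, true), u (i, false))) ⟨fun i h => ?_, fun i j hij => ?_⟩
    · simpa using hu h
    · refine ⟨fun h => ?_, fun h => ?_, fun h => ?_, fun h => ?_⟩ <;>
        simpa [hij] using hu h
  have hB0 : 0 ≤ mWeight w gstar := Finset.sum_nonneg fun i _ => hnonneg _ _
  have hc : Fintype.card (Fin m × Bool) = Fintype.card O := by
    simp [hO, mul_comm]
  let e := Fintype.equivOfCardEq hc
  have hu : Function.Injective (fun p => (e p : V)) :=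
    Subtype.val_injective.comp e.injective
  have hup := aux_upper m w _ hm hB0 h0 _ hu
  rw [← aux_offDiag w _ hu O (fun v => ⟨fun h => ⟨e.symm ⟨v, h⟩, by simp⟩,
    fun ⟨i, hi⟩ => hi ▸ (e i).2⟩)] at hup
  let s : Fin m × Bool → V := fun p => if p.2 then (f p.1).1 else (f p.1).2
  have hs : Function.Injective s := by
    rintro ⟨i, b⟩ ⟨j, c⟩ h
    by_cases hij : i = j
    · subst hij
      have := hf.1 i
      cases b <;> cases c <;> simp_all [s]
    · obtain ⟨h1, h2, h3, h4⟩ := hf.2 i j hij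
      cases b <;> cases c <;> simp_all [s]
  have hlo := aux_lower m w hsymm hmetric s hs
  rw [← aux_offDiag w s hs (Finset.univ.filter
            (fun v : V => ∃ i, v = (f i).1 ∨ v = (f i).2)) (by
      intro v
      simp only [Finset.mem_filter, Finset.mem_univ, true_and]
      constructor
      · rintro ⟨i, h | h⟩
        · exact ⟨(i, true), by simp [s, h]⟩
        · exact ⟨(i, false), by simp [s, h]⟩
      · rintro ⟨⟨i, b⟩, h⟩
        refine ⟨i, ?_⟩
        cases b
        · right; simpa [s] using h.symm
        · left; simpa [s] using h.symm)] at hlo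
  have hfs : ∑ i, w (s (i, true)) (s (i, false)) = mWeight w f := by simp [s, mWeight]
  rw [hfs] at hlo
  have k1 := mul_le_mul_of_nonneg_left hlo (show (0 : ℝ) ≤ α by linarith)
  have k2 := mul_le_mul_of_nonneg_left happrox (show (0 : ℝ) ≤ 4 * m by positivity)
  linarith
end
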